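/- Let z1 ≠ z2 be complex numbers, n ≥ 1, and let f : ℂ → ℂ be analytic at z1 and at z2. Let P_n(z) = Σ_{k=0}^{n−1} [a_k(z1,z2)(z−z1) + a_k(z2,z1)(z−z2)]·((z−z1)(z−z2))^k be the two-point Taylor polynomial. Then P_n agrees with f to order n−1 at both points: for every 0 ≤ j ≤ n−1, the j-th derivative of P_n at z1 equals f^{(j)}(z1), and the j-th derivative of P_n at z2 equals f^{(j)}(z2). (That is, P_n is the Hermite interpolation polynomial of f at z1, z2 with data f(z_i), f'(z_i), …, f^{(n−1)}(z_i), i = 1, 2.) -/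

import Mathlib

/-- The two-point Taylor coefficient `a_k(z1, z2)` of `f` at the points `z1, z2`. -/
noncomputable def twoPointCoeff (f : ℂ → ℂ) (z1 z2 : ℂ) (k : ℕ) : ℂ :=
  if k = 0 then f z2 / (z2 - z1)
  else ∑ j ∈ Finset.range (k + 1),
    ((Nat.factorial (k + j - 1) : ℂ) / ((Nat.factorial j : ℂ) * (Nat.factorial (k - j) : ℂ))) *
      (((-1 : ℂ) ^ (k + 1) * (k : ℂ) * iteratedDeriv (k - j) f z2
          + (-1 : ℂ) ^ j * (j : ℂ) * iteratedDeriv (k - j) f z1)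
        / ((Nat.factorial k : ℂ) * (z1 - z2) ^ (k + j + 1)))

/-!
The argument is formal, in the jets of `f` at the two points. Up to the factor `1 / (z2 - z1)`,
`a_k(z1, z2)` is the sum of the residues at `z1` and `z2` of `f(w) / ((w - z1)^k (w - z2)^(k+1))`.
Subtract from `f` the linear polynomial interpolating it at `z1, z2` and divide the difference by
`(w - z1)(w - z2)`: for the quotient `g` one has `a_(k+1)(f) = a_k(g)`, because the residues of
`1 / ((w - z1)^(a+1) (w - z2)^(b+1))` sum to zero. Induction on `n` then shows that the expansion
reproduces the jet of `f` at `z1` to order `n`, and the expansion is symmetric in the two points.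
-/

section PowerSeries

open PowerSeries

variable {K : Type*} [Field K] {d : K}

theorem constantCoeff_X_add_C_ne_zero (hd : d ≠ 0) : constantCoeff (X + C d : K⟦X⟧) ≠ 0 := by
  simpa using hd

theorem inv_X_add_C_mul_cancel (hd : d ≠ 0) : (X + C d : K⟦X⟧)⁻¹ * (X + C d) = 1 :=
  PowerSeries.inv_mul_cancel _ (constantCoeff_X_add_C_ne_zero hd)

theorem X_mul_X_add_C_dvd_iff (hd : d ≠ 0) {F : K⟦X⟧} :
    X * (X + C d) ∣ F ↔ constantCoeff F = 0 := by
  have hunit : IsUnit (X + C d : K⟦X⟧) :=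
    isUnit_iff_constantCoeff.mpr (constantCoeff_X_add_C_ne_zero hd).isUnit
  rw [hunit.mul_right_dvd, X_dvd_iff]

theorem inv_X_add_C_pow_succ (hd : d ≠ 0) (m : ℕ) :
    (X + C d : K⟦X⟧)⁻¹ ^ (m + 1) =
      C (d⁻¹ ^ (m + 1)) * rescale (-d⁻¹) (mk fun i ↦ ((m + i).choose m : K)) := by
  have hrescale : (X + C d : K⟦X⟧) = C d * rescale (-d⁻¹) (1 - X) := by
    have hC : (C d * C d⁻¹ : K⟦X⟧) = 1 := by rw [← map_mul, mul_inv_cancel₀ hd, map_one]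
    rw [map_sub, map_one, rescale_X, map_neg]
    linear_combination -X * hC
  have hseries := congrArg (rescale (-d⁻¹)) (mk_add_choose_mul_one_sub_pow_eq_one K m)
  rw [map_mul, map_pow, map_one] at hseries
  have hC : (C (d⁻¹ ^ (m + 1)) * C d ^ (m + 1) : K⟦X⟧) = 1 := by
    rw [← map_pow, ← map_mul, ← mul_pow, inv_mul_cancel₀ hd, one_pow, map_one]
  refine left_inv_eq_right_inv (a := (X + C d) ^ (m + 1)) ?_ ?_
  · rw [← mul_pow, inv_X_add_C_mul_cancel hd, one_pow]
  · rw [hrescale, mul_pow]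
    linear_combination hC + C (d⁻¹ ^ (m + 1)) * C d ^ (m + 1) * hseries

theorem coeff_inv_X_add_C_pow_succ (hd : d ≠ 0) (m i : ℕ) :
    coeff i ((X + C d : K⟦X⟧)⁻¹ ^ (m + 1)) =
      (-1) ^ i * ((m + i).choose m : K) / d ^ (m + 1 + i) := by
  rw [inv_X_add_C_pow_succ hd, coeff_C_mul, coeff_rescale, coeff_mk, neg_pow, inv_pow, inv_pow,
    pow_add d]
  ring

theorem coeff_inv_X_add_C_neg_pow_succ (hd : d ≠ 0) (m i : ℕ) :
    coeff i ((X + C (-d) : K⟦X⟧)⁻¹ ^ (m + 1)) =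
      (-1) ^ (m + 1) * ((m + i).choose m : K) / d ^ (m + 1 + i) := by
  rw [coeff_inv_X_add_C_pow_succ (neg_ne_zero.mpr hd), neg_pow d, pow_add (-1 : K)]
  rcases neg_one_pow_eq_or K i with hi | hi <;>
    rcases neg_one_pow_eq_or K (m + 1) with hm | hm <;> simp [hi, hm, neg_div, div_neg]

theorem coeff_X_mul_inv_X_add_C_pow (hd : d ≠ 0) (k j : ℕ) :
    coeff j (X * (X + C d : K⟦X⟧)⁻¹ ^ (k + 2)) =
      -((-1) ^ j * ((k + j).choose (k + 1) : K) / d ^ (k + 1 + j)) := by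
  cases j with
  | zero => simp
  | succ j =>
    rw [coeff_succ_X_mul, coeff_inv_X_add_C_pow_succ hd, pow_succ, add_right_comm k 1 j,
      add_assoc k, add_right_comm (k + 1) 1 j, add_assoc (k + 1)]
    ring

-- The two terms are the residues of `1 / (w ^ (a + 1) * (w + d) ^ (b + 1))` at `0` and at `-d`.
theorem coeff_inv_X_add_C_pow_add_eq_zero (hd : d ≠ 0) (a b : ℕ) :
    coeff a ((X + C d : K⟦X⟧)⁻¹ ^ (b + 1)) + coeff b ((X + C (-d) : K⟦X⟧)⁻¹ ^ (a + 1)) = 0 := by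
  rw [coeff_inv_X_add_C_pow_succ hd, coeff_inv_X_add_C_neg_pow_succ hd, add_comm b a,
    Nat.choose_symm_add, add_right_comm b, add_comm b a, add_right_comm a 1 b]
  ring

theorem coeff_X_mul_X_mul_inv_X_add_C_pow_add_eq_zero (hd : d ≠ 0) (k : ℕ) :
    coeff (k + 1) (X * (X * (X + C d : K⟦X⟧)⁻¹ ^ (k + 2))) +
      coeff (k + 1) ((X + C (-d) : K⟦X⟧)⁻¹ ^ k) = 0 := by
  cases k with
  | zero => simp [coeff_one]
  | succ k =>
    rw [coeff_succ_X_mul, coeff_succ_X_mul,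
      coeff_inv_X_add_C_pow_add_eq_zero hd]

/-- The residue form of the two-point Taylor coefficient `a_k(z₁, z₂)`, with `d = z₁ - z₂` and with
`F`, `G` the expansions of `f` at `z₁`, `z₂`: the sum of the residues at `z₁` and `z₂` of
`f(w) / ((w - z₁)^k (w - z₂)^(k+1))`, divided by `z₂ - z₁`. The factor `X` in the first summand
lets the residue at `z₁`, a coefficient of degree `k - 1`, be read off also for `k = 0`. -/
noncomputable def twoPointResidue (d : K) (F G : K⟦X⟧) (k : ℕ) : K :=
  (coeff k (X * F * (X + C d)⁻¹ ^ (k + 1)) + coeff k (G * (X + C (-d))⁻¹ ^ k)) / (-d)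

theorem twoPointResidue_zero (d : K) (F G : K⟦X⟧) :
    twoPointResidue d F G 0 = constantCoeff G / (-d) := by
  simp [twoPointResidue]

theorem twoPointResidue_succ (hd : d ≠ 0) {a b : K} {F G F' G' : K⟦X⟧}
    (hF : F = C a * X + C b * (X + C d) + X * (X + C d) * F')
    (hG : G = C a * (X + C (-d)) + C b * X + X * (X + C (-d)) * G') (k : ℕ) :
    twoPointResidue d F G (k + 1) = twoPointResidue d F' G' k := by
  have hI := inv_X_add_C_mul_cancel hd
  have hJ := inv_X_add_C_mul_cancel (neg_ne_zero.mpr hd)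
  have ha := coeff_X_mul_X_mul_inv_X_add_C_pow_add_eq_zero hd k
  have hb := coeff_inv_X_add_C_pow_add_eq_zero hd k k
  unfold twoPointResidue
  set I := (X + C d : K⟦X⟧)⁻¹
  set J := (X + C (-d) : K⟦X⟧)⁻¹
  have hFI : X * F * I ^ (k + 1 + 1) = C a * (X * (X * I ^ (k + 2))) +
      C b * (X * I ^ (k + 1)) + X * (X * F' * I ^ (k + 1)) := by
    rw [hF]
    linear_combination (C b * X * I ^ (k + 1) + X * X * F' * I ^ (k + 1)) * hI
  have hGJ : G * J ^ (k + 1) = C a * J ^ k + C b * (X * J ^ (k + 1)) + X * (G' * J ^ k) := by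
    rw [hG]
    linear_combination (C a * J ^ k + X * G' * J ^ k) * hJ
  congr 1
  simp only [hFI, hGJ, map_add, coeff_C_mul, coeff_succ_X_mul k (I ^ (k + 1)),
    coeff_succ_X_mul k (J ^ (k + 1)), coeff_succ_X_mul k (X * F' * I ^ (k + 1)),
    coeff_succ_X_mul k (G' * J ^ k)]
  linear_combination a * ha + b * hb

/-- The two-point Taylor polynomial of degree `2n - 1` re-expanded at `z₁`, so that `w - z₁` becomes
`X` and `w - z₂` becomes `X + d` with `d = z₁ - z₂`; `F` and `G` are the expansions of `f` at `z₁`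
and `z₂`. -/
noncomputable def twoPointExpansion (d : K) (F G : K⟦X⟧) (n : ℕ) : K⟦X⟧ :=
  ∑ k ∈ Finset.range n,
    (C (twoPointResidue d F G k) * X + C (twoPointResidue (-d) G F k) * (X + C d)) *
      (X * (X + C d)) ^ k

theorem twoPointExpansion_succ {F G F' G' : K⟦X⟧}
    (hF : ∀ k, twoPointResidue d F G (k + 1) = twoPointResidue d F' G' k)
    (hG : ∀ k, twoPointResidue (-d) G F (k + 1) = twoPointResidue (-d) G' F' k) (n : ℕ) :
    twoPointExpansion d F G (n + 1) =
      C (twoPointResidue d F G 0) * X + C (twoPointResidue (-d) G F 0) * (X + C d) +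
        X * (X + C d) * twoPointExpansion d F' G' n := by
  rw [twoPointExpansion, Finset.sum_range_succ', pow_zero, mul_one, add_comm, twoPointExpansion,
    Finset.mul_sum]
  congr 1
  refine Finset.sum_congr rfl fun k _ ↦ ?_
  rw [hF, hG]
  ring

theorem X_pow_dvd_sub_twoPointExpansion (hd : d ≠ 0) (F G : K⟦X⟧) (n : ℕ) :
    X ^ n ∣ F - twoPointExpansion d F G n := by
  induction n generalizing F G with
  | zero => simp
  | succ n ih =>
    have hd' : -d ≠ 0 := neg_ne_zero.mpr hd
    set a := twoPointResidue d F G 0 with ha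
    set b := twoPointResidue (-d) G F 0 with hb
    rw [twoPointResidue_zero] at ha hb
    obtain ⟨F', hF'⟩ : X * (X + C d) ∣ F - (C a * X + C b * (X + C d)) := by
      rw [X_mul_X_add_C_dvd_iff hd]
      simp [hb, hd]
    obtain ⟨G', hG'⟩ : X * (X + C (-d)) ∣ G - (C a * (X + C (-d)) + C b * X) := by
      rw [X_mul_X_add_C_dvd_iff hd']
      simp [ha, div_neg, hd]
    rw [sub_eq_iff_eq_add'] at hF' hG'
    have hF_succ := twoPointResidue_succ hd hF' hG'
    have hG_succ : ∀ k, twoPointResidue (-d) G F (k + 1) = twoPointResidue (-d) G' F' k :=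
      twoPointResidue_succ hd' (a := b) (b := a)
        (by linear_combination hG') (by rw [neg_neg]; linear_combination hF')
    obtain ⟨Q, hQ⟩ := ih F' G'
    refine ⟨(X + C d) * Q, ?_⟩
    rw [twoPointExpansion_succ hF_succ hG_succ]
    linear_combination hF' + X * (X + C d) * hQ

end PowerSeries

section Jets

open Polynomial
open scoped Nat PowerSeries

variable {K : Type*} [Field K]

/-- The formal Taylor series whose derivatives at the base point are the given jet `u`. -/
noncomputable def jetSeries (u : ℕ → K) : K⟦X⟧ :=
  PowerSeries.mk fun i ↦ u i / (i ! : K)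

/-- The two-point Taylor coefficient `a_k(z₁, z₂)` for arbitrary jets `u` at `z₁` and `v` at `z₂`,
in place of the derivatives of a function. -/
noncomputable def twoPointJetCoeff (u v : ℕ → K) (z₁ z₂ : K) (k : ℕ) : K :=
  if k = 0 then v 0 / (z₂ - z₁)
  else ∑ j ∈ Finset.range (k + 1),
    (((k + j - 1)! : K) / ((j ! : K) * ((k - j)! : K))) *
      (((-1) ^ (k + 1) * (k : K) * v (k - j) + (-1) ^ j * (j : K) * u (k - j)) /
        ((k ! : K) * (z₁ - z₂) ^ (k + j + 1)))

/-- The two-point Taylor polynomial of degree `2n - 1` for arbitrary jets `u` at `z₁` and `v` at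
`z₂`. -/
noncomputable def twoPointTaylorPolynomial (u v : ℕ → K) (z₁ z₂ : K) (n : ℕ) : K[X] :=
  ∑ k ∈ Finset.range n,
    (C (twoPointJetCoeff u v z₁ z₂ k) * (X - C z₁) +
        C (twoPointJetCoeff v u z₂ z₁ k) * (X - C z₂)) *
      ((X - C z₁) * (X - C z₂)) ^ k

theorem twoPointTaylorPolynomial_swap (u v : ℕ → K) (z₁ z₂ : K) (n : ℕ) :
    twoPointTaylorPolynomial u v z₁ z₂ n = twoPointTaylorPolynomial v u z₂ z₁ n := by
  refine Finset.sum_congr rfl fun k _ ↦ ?_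
  ring

theorem eval_iterate_derivative_eq_factorial_mul_coeff_taylor {R : Type*} [CommSemiring R]
    (p : R[X]) (z : R) (j : ℕ) :
    (derivative^[j] p).eval z = (j ! : R) * (taylor z p).coeff j := by
  rw [taylor_coeff, ← factorial_smul_hasseDeriv, LinearMap.smul_apply, eval_smul, nsmul_eq_mul]

variable [CharZero K]

theorem succ_mul_factorial_div_eq_choose (k j : ℕ) :
    ((k + 1 : ℕ) : K) * (k + j)! / (j ! * (k + 1)!) = (k + j).choose k := by
  have hk : ((k + 1 : ℕ) : K) ≠ 0 := Nat.cast_ne_zero.mpr k.succ_ne_zero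
  rw [Nat.cast_add_choose, Nat.factorial_succ, Nat.cast_mul]
  field_simp

theorem mul_factorial_div_eq_choose_succ (k j : ℕ) :
    (j : K) * (k + j)! / (j ! * (k + 1)!) = (k + j).choose (k + 1) := by
  cases j with
  | zero => simp
  | succ j =>
    have hj : ((j + 1 : ℕ) : K) ≠ 0 := Nat.cast_ne_zero.mpr j.succ_ne_zero
    rw [← add_assoc, add_right_comm, Nat.cast_add_choose, Nat.factorial_succ j, Nat.cast_mul]
    field_simp

theorem twoPointJetCoeff_eq_twoPointResidue {z₁ z₂ : K} (h : z₁ ≠ z₂) (u v : ℕ → K) (k : ℕ) :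
    twoPointJetCoeff u v z₁ z₂ k =
      twoPointResidue (z₁ - z₂) (jetSeries u) (jetSeries v) k := by
  cases k with
  | zero => simp [twoPointJetCoeff, twoPointResidue_zero, jetSeries]
  | succ k =>
    have hd : z₁ - z₂ ≠ 0 := sub_ne_zero.mpr h
    rw [twoPointJetCoeff, if_neg k.succ_ne_zero, twoPointResidue]
    generalize z₁ - z₂ = d at hd ⊢
    rw [mul_right_comm, mul_comm (jetSeries v), PowerSeries.coeff_mul, PowerSeries.coeff_mul,
      Finset.Nat.sum_antidiagonal_eq_sum_range_succ_mk,
      Finset.Nat.sum_antidiagonal_eq_sum_range_succ_mk, ← Finset.sum_add_distrib, Finset.sum_div]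
    refine Finset.sum_congr rfl fun j _ ↦ ?_
    rw [coeff_X_mul_inv_X_add_C_pow hd, coeff_inv_X_add_C_neg_pow_succ hd, jetSeries, jetSeries,
      PowerSeries.coeff_mk, PowerSeries.coeff_mk, ← succ_mul_factorial_div_eq_choose,
      ← mul_factorial_div_eq_choose_succ, Nat.add_right_comm k 1 j, Nat.add_sub_cancel]
    field_simp
    ring

theorem coe_taylor_twoPointTaylorPolynomial {z₁ z₂ : K} (h : z₁ ≠ z₂) (u v : ℕ → K) (n : ℕ) :
    ((taylor z₁ (twoPointTaylorPolynomial u v z₁ z₂ n) : K[X]) : K⟦X⟧) =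
      twoPointExpansion (z₁ - z₂) (jetSeries u) (jetSeries v) n := by
  rw [twoPointTaylorPolynomial, twoPointExpansion, ← coeToPowerSeries.ringHom_apply, map_sum,
    map_sum]
  refine Finset.sum_congr rfl fun k _ ↦ ?_
  rw [← twoPointJetCoeff_eq_twoPointResidue h, neg_sub,
    ← twoPointJetCoeff_eq_twoPointResidue h.symm]
  simp only [taylor_mul, taylor_pow, map_add, map_sub, map_mul, map_pow, taylor_X, taylor_C,
    coeToPowerSeries.ringHom_apply, coe_C, coe_X]
  ring

theorem eval_iterate_derivative_twoPointTaylorPolynomial_left {z₁ z₂ : K} (h : z₁ ≠ z₂)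
    (u v : ℕ → K) {n j : ℕ} (hj : j < n) :
    (derivative^[j] (twoPointTaylorPolynomial u v z₁ z₂ n)).eval z₁ = u j := by
  have hcoeff := PowerSeries.X_pow_dvd_iff.mp
    (X_pow_dvd_sub_twoPointExpansion (sub_ne_zero.mpr h) (jetSeries u) (jetSeries v) n) j hj
  rw [map_sub, sub_eq_zero, ← coe_taylor_twoPointTaylorPolynomial h, coeff_coe, jetSeries,
    PowerSeries.coeff_mk] at hcoeff
  rw [eval_iterate_derivative_eq_factorial_mul_coeff_taylor, ← hcoeff]
  exact mul_div_cancel₀ _ (Nat.cast_ne_zero.mpr j.factorial_ne_zero)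

theorem twoPointTaylorPolynomial_hermite_general {z₁ z₂ : K} (h : z₁ ≠ z₂) (u v : ℕ → K)
    {n j : ℕ} (hj : j < n) :
    (derivative^[j] (twoPointTaylorPolynomial u v z₁ z₂ n)).eval z₁ = u j ∧
      (derivative^[j] (twoPointTaylorPolynomial u v z₁ z₂ n)).eval z₂ = v j := by
  refine ⟨eval_iterate_derivative_twoPointTaylorPolynomial_left h u v hj, ?_⟩
  rw [twoPointTaylorPolynomial_swap]
  exact eval_iterate_derivative_twoPointTaylorPolynomial_left h.symm v u hj

end Jets

section Functions

open Polynomial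

theorem iteratedDeriv_eval_polynomial {𝕜 : Type*} [NontriviallyNormedField 𝕜] (p : 𝕜[X]) (j : ℕ) :
    iteratedDeriv j (fun z ↦ p.eval z) = fun z ↦ (derivative^[j] p).eval z := by
  induction j with
  | zero => simp
  | succ j ih =>
    ext z
    rw [iteratedDeriv_succ, ih, Function.iterate_succ_apply', Polynomial.deriv]

theorem twoPointCoeff_eq_twoPointJetCoeff (f : ℂ → ℂ) (z₁ z₂ : ℂ) (k : ℕ) :
    twoPointCoeff f z₁ z₂ k =
      twoPointJetCoeff (iteratedDeriv · f z₁) (iteratedDeriv · f z₂) z₁ z₂ k := by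
  simp only [twoPointCoeff, twoPointJetCoeff, iteratedDeriv_zero]

theorem sum_twoPointCoeff_eq_eval_twoPointTaylorPolynomial (f : ℂ → ℂ) (z₁ z₂ : ℂ) (n : ℕ) :
    (fun z ↦ ∑ k ∈ Finset.range n,
      (twoPointCoeff f z₁ z₂ k * (z - z₁) + twoPointCoeff f z₂ z₁ k * (z - z₂)) *
        ((z - z₁) * (z - z₂)) ^ k) =
      fun z ↦ (twoPointTaylorPolynomial (iteratedDeriv · f z₁) (iteratedDeriv · f z₂)
        z₁ z₂ n).eval z := by
  ext z
  simp [twoPointTaylorPolynomial, eval_finsetSum, twoPointCoeff_eq_twoPointJetCoeff]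

end Functions

/-- The two-point Taylor polynomial of degree `2n−1` is the Hermite interpolation
polynomial: it agrees with `f` to order `n−1` at both `z1` and `z2`. -/
theorem twoPointTaylorPolynomial_hermite
    (z1 z2 : ℂ) (h12 : z1 ≠ z2) (n : ℕ) (hn : 1 ≤ n) (f : ℂ → ℂ)
    (hf1 : AnalyticAt ℂ f z1) (hf2 : AnalyticAt ℂ f z2) :
    ∀ j : ℕ, j ≤ n - 1 →
      iteratedDeriv j (fun z : ℂ => ∑ k ∈ Finset.range n,
          (twoPointCoeff f z1 z2 k * (z - z1) + twoPointCoeff f z2 z1 k * (z - z2)) *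
            ((z - z1) * (z - z2)) ^ k) z1 = iteratedDeriv j f z1 ∧
      iteratedDeriv j (fun z : ℂ => ∑ k ∈ Finset.range n,
          (twoPointCoeff f z1 z2 k * (z - z1) + twoPointCoeff f z2 z1 k * (z - z2)) *
            ((z - z1) * (z - z2)) ^ k) z2 = iteratedDeriv j f z2 := by
  intro j hj
  rw [sum_twoPointCoeff_eq_eval_twoPointTaylorPolynomial, iteratedDeriv_eval_polynomial]
  exact twoPointTaylorPolynomial_hermite_general h12 _ _ (Nat.lt_of_le_pred hn hj)
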